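/- Let Λ = ω₁ℤ + ω₂ℤ with ω₁ > 0 real, Im ω₂ > 0, and ω₁·Im ω₂ = π/2, let N ≥ 1 be an integer and γ ∈ ℂ. A function F : ℂ → ℂ is of the form F = λ·Π_𝛂 for some λ ∈ ℂ and some 𝛂 = (α₁,…,α_N) ∈ ℂ^N with α₁ + ⋯ + α_N − γ ∈ Λ if and only if F is C¹-smooth and satisfies both: (a) ∂̄_z F(z) + N z F(z) = 0 for all z ∈ ℂ, where ∂̄_z = (∂_x + i∂_y)/2; and (b) F(z + ω_j) = (−1)^N e^{2i·Im(ω̄_j(Nz − 2γ))} F(z) for j = 1, 2 and all z ∈ ℂ. -/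

import Mathlib

open MeasureTheory

/-- The lattice `Λ = ω₁ℤ + ω₂ℤ` as a subset of `ℂ`. -/
def latticeSet (ω₁ ω₂ : ℂ) : Set ℂ :=
  {w : ℂ | ∃ m n : ℤ, w = (m : ℂ) * ω₁ + (n : ℂ) * ω₂}

/-- The Weierstrass sigma function of the lattice `ω₁ℤ + ω₂ℤ`. -/
noncomputable def wSigma (ω₁ ω₂ : ℂ) (z : ℂ) : ℂ :=
  z * ∏' p : {p : ℤ × ℤ // p ≠ 0},
      (1 - z / ((p.1.1 : ℂ) * ω₁ + (p.1.2 : ℂ) * ω₂)) *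
        Complex.exp (z / ((p.1.1 : ℂ) * ω₁ + (p.1.2 : ℂ) * ω₂) +
          z ^ 2 / (2 * ((p.1.1 : ℂ) * ω₁ + (p.1.2 : ℂ) * ω₂) ^ 2))

/-- The Weierstrass zeta function `ζ = σ'/σ`. -/
noncomputable def wZeta (ω₁ ω₂ : ℂ) (z : ℂ) : ℂ :=
  deriv (wSigma ω₁ ω₂) z / wSigma ω₁ ω₂ z

/-- The quasi-period `λ₁ = 2ζ(ω₁/2)`. -/
noncomputable def lambda1 (ω₁ ω₂ : ℂ) : ℂ := 2 * wZeta ω₁ ω₂ (ω₁ / 2)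

/-- The constant `b = 1 − λ₁/(2ω₁)`. -/
noncomputable def bconst (ω₁ ω₂ : ℂ) : ℂ := 1 - lambda1 ω₁ ω₂ / (2 * ω₁)

/-- The modified Weierstrass sigma function `σ_*(z) = e^{b z²} σ(z)`. -/
noncomputable def sigmaStar (ω₁ ω₂ : ℂ) (z : ℂ) : ℂ :=
  Complex.exp (bconst ω₁ ω₂ * z ^ 2) * wSigma ω₁ ω₂ z

/-- A fundamental domain of the lattice `ω₁ℤ + ω₂ℤ`. -/
def fundDomain (ω₁ ω₂ : ℂ) : Set ℂ :=
  (fun p : ℝ × ℝ => (p.1 : ℂ) * ω₁ + (p.2 : ℂ) * ω₂) ''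
    (Set.Ico (0 : ℝ) 1 ×ˢ Set.Ico (0 : ℝ) 1)

/-- The normalizing constant `A_Λ`. -/
noncomputable def Aconst (ω₁ ω₂ : ℂ) : ℝ :=
  2 / Real.pi * ∫ z in fundDomain ω₁ ω₂, (Real.log ‖sigmaStar ω₁ ω₂ z‖ - ‖z‖ ^ 2)

/-- The unipolar Green function of the torus `ℂ/Λ`. -/
noncomputable def Utorus (ω₁ ω₂ : ℂ) (z w : ℂ) : ℝ :=
  Real.log ‖sigmaStar ω₁ ω₂ (z - w)‖ - ‖z - w‖ ^ 2 - Aconst ω₁ ω₂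

/-- The monic first degree pseudopolynomial on the torus with root `α`. -/
noncomputable def pseudoPoly (ω₁ ω₂ : ℂ) (α z : ℂ) : ℂ :=
  Complex.exp (2 * Complex.I * ((((starRingEnd ℂ) α) * z).im : ℂ)) *
    (Complex.exp (-((‖z - α‖ ^ 2 : ℝ) : ℂ)) * sigmaStar ω₁ ω₂ (z - α))

/-!
The function `ζ = σ'/σ` satisfies `ζ' = -℘`, so `ζ (z + ω) - ζ z` is constant and `σ` has
exponential factors of automorphy. The Legendre relation between the quasi-periods is obtained by
counting zeros: a quasi-periodic entire function whose factors have degree `k` vanishes identically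
if `k < 0` and has a zero if `k > 0`, as comparison with powers of the Jacobi theta function shows,
and this forces `σ` to have degree one.

The `∂̄`-equation says that `G z = exp (N |z|²) F z` is entire, and the conditions on the translates
of `F` then say that `G` is a canonical theta function of degree `N`. If `N > 0` such a `G` has
a zero `α`; dividing by the canonical theta function of degree one attached to `σ_* (z - α)` lowers
the degree. In degree zero `|G|` is periodic, so `G` is constant, and this constant can only be
nonzero if the remaining characteristic lies in `Λ`.
-/

open Complex Filter Topology ComplexConjugate

/-! ### The Weierstrass product -/

/-- The Weierstrass elementary factor of genus two, `E₂(u) = (1 - u) exp (u + u² / 2)`. -/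
noncomputable def elementaryFactor (u : ℂ) : ℂ := (1 - u) * exp (u + u ^ 2 / 2)

lemma differentiable_elementaryFactor : Differentiable ℂ elementaryFactor := by
  unfold elementaryFactor
  fun_prop

lemma elementaryFactor_zero : elementaryFactor 0 = 1 := by simp [elementaryFactor]

lemma elementaryFactor_eq_zero_iff {u : ℂ} : elementaryFactor u = 0 ↔ u = 1 := by
  rw [elementaryFactor, mul_eq_zero_iff_right (exp_ne_zero _), sub_eq_zero, eq_comm]

lemma elementaryFactor_eq_exp {u : ℂ} (hu : u ≠ 1) :
    elementaryFactor u = exp (log (1 + -u) - logTaylor 3 (-u)) := by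
  have hlog : logTaylor 3 (-u) = -(u + u ^ 2 / 2) := by
    simp only [logTaylor_succ, logTaylor_zero, Pi.add_apply, zero_add]
    push_cast
    ring
  rw [elementaryFactor, hlog, sub_neg_eq_add, exp_add _ (u + _), ← sub_eq_add_neg,
    exp_log (sub_ne_zero.mpr hu.symm)]

lemma norm_elementaryFactor_sub_one_le {u : ℂ} (hu : ‖u‖ ≤ 1 / 2) :
    ‖elementaryFactor u - 1‖ ≤ 2 * ‖u‖ ^ 3 := by
  have hu1 : u ≠ 1 := by rintro rfl; norm_num at hu
  set w := log (1 + -u) - logTaylor 3 (-u) with hw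
  have hinv : (1 - ‖u‖)⁻¹ ≤ 2 := inv_le_of_inv_le₀ two_pos (by linarith)
  have hlog : ‖w‖ ≤ ‖u‖ ^ 3 := by
    have h := norm_log_sub_logTaylor_le 2 (z := -u) (by rw [norm_neg]; linarith)
    rw [norm_neg, ← hw] at h
    norm_num at h
    nlinarith [pow_nonneg (norm_nonneg u) 3]
  have hw1 : ‖w‖ ≤ 1 := hlog.trans (pow_le_one₀ (norm_nonneg u) (by linarith))
  rw [elementaryFactor_eq_exp hu1]
  linarith [norm_exp_sub_one_le hw1]

lemma norm_elementaryFactor_div_sub_one_le {z w : ℂ} {r : ℝ} (hr : 0 ≤ r) (hz : ‖z‖ ≤ r)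
    (hw : 2 * r < ‖w‖) : ‖elementaryFactor (z / w) - 1‖ ≤ 2 * r ^ 3 * ‖w‖⁻¹ ^ 3 := by
  have hw0 : 0 < ‖w‖ := by linarith
  have hle : ‖z / w‖ ≤ r * ‖w‖⁻¹ := by
    rw [norm_div, div_eq_mul_inv]
    gcongr
  have hhalf : r * ‖w‖⁻¹ ≤ 1 / 2 := by
    rw [← div_eq_mul_inv, div_le_iff₀ hw0]
    linarith
  calc ‖elementaryFactor (z / w) - 1‖ ≤ 2 * ‖z / w‖ ^ 3 :=
        norm_elementaryFactor_sub_one_le (hle.trans hhalf)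
    _ ≤ 2 * (r * ‖w‖⁻¹) ^ 3 := by gcongr
    _ = 2 * r ^ 3 * ‖w‖⁻¹ ^ 3 := by ring

section Sigma

variable (L : PeriodPair)

/-- The product of the elementary factors of all lattice points, so that `σ(z) = z P(z)`. The
point `0` contributes `E₂(z / 0) = E₂(0) = 1`. -/
noncomputable def latticeProd (z : ℂ) : ℂ := ∏' l : L.lattice, elementaryFactor (z / l)

lemma eventually_norm_elementaryFactor_sub_one_le {r : ℝ} (hr : 0 ≤ r) :
    ∀ᶠ l : L.lattice in cofinite, ∀ z ∈ Metric.closedBall 0 r,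
      ‖elementaryFactor (z / l) - 1‖ ≤ 2 * r ^ 3 * ‖l‖⁻¹ ^ 3 := by
  have hfin := isCompact_iff_finite.mp (isCompact_closedBall (0 : L.lattice) (2 * r))
  filter_upwards [hfin.compl_mem_cofinite] with l hl z hz
  exact norm_elementaryFactor_div_sub_one_le hr (by simpa using hz) (by simpa using hl)

lemma summable_lattice_bound (r : ℝ) : Summable fun l : L.lattice => 2 * r ^ 3 * ‖l‖⁻¹ ^ 3 :=
  (ZLattice.summable_norm_pow_inv L.lattice 3 (by simp)).mul_left _

lemma summable_norm_elementaryFactor_sub_one (z : ℂ) :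
    Summable fun l : L.lattice => ‖elementaryFactor (z / l) - 1‖ :=
  (summable_lattice_bound L ‖z‖).of_norm_bounded_eventually <| by
    filter_upwards [eventually_norm_elementaryFactor_sub_one_le L (norm_nonneg z)] with l hl
    simpa using hl z (by simp)

lemma hasProdLocallyUniformlyOn_latticeProd :
    HasProdLocallyUniformlyOn (fun (l : L.lattice) z => elementaryFactor (z / l))
      (latticeProd L) Set.univ := by
  refine hasProdLocallyUniformlyOn_of_forall_compact isOpen_univ fun K _ hK => ?_
  obtain ⟨r, hr, hKr⟩ := hK.isBounded.subset_closedBall_lt 0 0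
  have hprod := (summable_lattice_bound L r).hasProdUniformlyOn_one_add (K := K)
    (f := fun (l : L.lattice) z => elementaryFactor (z / l) - 1) hK
    ((eventually_norm_elementaryFactor_sub_one_le L hr.le).mono fun l hl z hz => hl z (hKr hz))
    fun l => ((differentiable_elementaryFactor.continuous.comp (by fun_prop)).sub
      continuous_const).continuousOn
  simp only [add_sub_cancel] at hprod
  exact hprod

lemma differentiableOn_prod_elementaryFactor (s : Finset L.lattice) :
    DifferentiableOn ℂ (fun z => ∏ l ∈ s, elementaryFactor (z / l)) Set.univ :=
  .fun_finsetProd fun _ _ => (differentiable_elementaryFactor.comp (by fun_prop)).differentiableOn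

lemma differentiable_latticeProd : Differentiable ℂ (latticeProd L) :=
  differentiableOn_univ.mp <|
    TendstoLocallyUniformlyOn.differentiableOn (hasProdLocallyUniformlyOn_latticeProd L)
      (.of_forall (differentiableOn_prod_elementaryFactor L)) isOpen_univ

lemma latticeProd_eq_zero_iff {z : ℂ} : latticeProd L z = 0 ↔ z ∈ L.lattice ∧ z ≠ 0 := by
  constructor
  · contrapose!
    intro hz
    have hne (l : L.lattice) : 1 + (elementaryFactor (z / l) - 1) ≠ 0 := by
      rw [add_sub_cancel, Ne, elementaryFactor_eq_zero_iff]
      intro h1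
      have hl : z = l := eq_of_div_eq_one h1
      simp [hz (hl ▸ l.2)] at h1
    simpa only [add_sub_cancel, latticeProd] using
      tprod_one_add_ne_zero_of_summable hne (summable_norm_elementaryFactor_sub_one L z)
  · rintro ⟨hz, hz0⟩
    exact tprod_of_exists_eq_zero ⟨⟨z, hz⟩, by simp [elementaryFactor_eq_zero_iff, hz0]⟩

lemma latticeProd_zero : latticeProd L 0 = 1 := by
  simp [latticeProd, elementaryFactor_zero]

lemma latticeProd_neg (z : ℂ) : latticeProd L (-z) = latticeProd L z := by
  rw [latticeProd, ← (Equiv.neg L.lattice).tprod_eq]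
  simp [latticeProd]

/-! ### The Weierstrass sigma function -/

lemma wSigma_eq (z : ℂ) : wSigma L.ω₁ L.ω₂ z = z * latticeProd L z := by
  have hsub := tprod_subtype_eq_of_mulSupport_subset (s := {p : ℤ × ℤ | p ≠ 0})
    (f := fun p => elementaryFactor (z / (L.latticeEquivProd.symm p : ℂ))) <| by
      intro p hp
      contrapose! hp
      simp_all [elementaryFactor_zero]
  rw [latticeProd, ← L.latticeEquivProd.symm.toEquiv.tprod_eq, wSigma]
  congr 1
  refine Eq.trans (tprod_congr fun p => ?_) hsub
  rw [elementaryFactor, PeriodPair.latticeEquiv_symm_apply, div_pow]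
  congr 3
  rw [div_div, mul_comm 2]

lemma wSigma_zero : wSigma L.ω₁ L.ω₂ 0 = 0 := by simp [wSigma]

lemma wSigma_neg (z : ℂ) : wSigma L.ω₁ L.ω₂ (-z) = -wSigma L.ω₁ L.ω₂ z := by
  simp [wSigma_eq, latticeProd_neg]

lemma wSigma_eq_zero_iff {z : ℂ} : wSigma L.ω₁ L.ω₂ z = 0 ↔ z ∈ L.lattice := by
  rw [wSigma_eq, mul_eq_zero, latticeProd_eq_zero_iff]
  refine ⟨?_, fun hz => (eq_or_ne z 0).imp_right fun h0 => ⟨hz, h0⟩⟩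
  rintro (rfl | ⟨hz, -⟩)
  exacts [L.lattice.zero_mem, hz]

lemma differentiable_wSigma : Differentiable ℂ (wSigma L.ω₁ L.ω₂) := by
  have hP := differentiable_latticeProd L
  rw [funext (wSigma_eq L)]
  fun_prop

lemma deriv_wSigma_zero : deriv (wSigma L.ω₁ L.ω₂) 0 = 1 := by
  rw [funext (wSigma_eq L), deriv_fun_mul (by fun_prop) (differentiable_latticeProd L 0)]
  simp [latticeProd_zero]

end Sigma

/-! ### The Weierstrass zeta function and translates of sigma -/

lemma tendsto_deriv_logDeriv {ι : Type*} {p : Filter ι} [p.NeBot] {f : ι → ℂ → ℂ} {g : ℂ → ℂ}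
    {s : Set ℂ} (hs : IsOpen s) {z : ℂ} (hz : z ∈ s) (hfg : TendstoLocallyUniformlyOn f g p s)
    (hf : ∀ n, DifferentiableOn ℂ (f n) s) (hf0 : ∀ n, f n z ≠ 0) (hg0 : g z ≠ 0) :
    Tendsto (fun n => deriv (logDeriv (f n)) z) p (𝓝 (deriv (logDeriv g) z)) := by
  have hderiv {h : ℂ → ℂ} (hh : DifferentiableOn ℂ h s) (h0 : h z ≠ 0) :
      deriv (logDeriv h) z = (deriv (deriv h) z * h z - deriv h z * deriv h z) / h z ^ 2 :=
    deriv_div ((hh.deriv hs).differentiableAt (hs.mem_nhds hz))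
      (hh.differentiableAt (hs.mem_nhds hz)) h0
  have hg := hfg.differentiableOn (.of_forall hf) hs
  have h1 := hfg.deriv (.of_forall hf) hs
  have h2 := h1.deriv (.of_forall fun n => (hf n).deriv hs) hs
  simp only [hderiv (hf _) (hf0 _), hderiv hg hg0]
  exact (((h2.tendsto_at hz).mul (hfg.tendsto_at hz)).sub
    ((h1.tendsto_at hz).mul (h1.tendsto_at hz))).div ((hfg.tendsto_at hz).pow 2)
      (pow_ne_zero 2 hg0)

lemma logDeriv_elementaryFactor_div {z w : ℂ} (hw : w ≠ 0) (hzw : z ≠ w) :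
    logDeriv (fun z => elementaryFactor (z / w)) z = (z - w)⁻¹ + 1 / w + z / w ^ 2 := by
  have hsub0 : z - w ≠ 0 := sub_ne_zero.mpr hzw
  have hne : 1 - z / w ≠ 0 := sub_ne_zero.mpr (div_ne_one_of_ne hzw).symm
  have hlin : HasDerivAt (fun z => 1 - z / w) (-(1 / w)) z :=
    ((hasDerivAt_id' z).div_const w).const_sub 1
  have hquad : HasDerivAt (fun z => z / w + (z / w) ^ 2 / 2) (1 / w + z / w ^ 2) z := by
    have hdiv := (hasDerivAt_id' z).div_const w
    refine (hdiv.fun_add ((hdiv.fun_pow 2).div_const 2)).congr_deriv ?_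
    push_cast
    ring
  have hfactor : HasDerivAt (fun z => elementaryFactor (z / w)) _ z := hlin.fun_mul hquad.cexp
  rw [logDeriv_apply, hfactor.deriv, elementaryFactor,
    div_eq_iff (mul_ne_zero hne (exp_ne_zero _))]
  field_simp
  ring

lemma deriv_logDeriv_elementaryFactor_div {z w : ℂ} (hw : w ≠ 0) (hzw : z ≠ w) :
    deriv (logDeriv fun z => elementaryFactor (z / w)) z = -(1 / (z - w) ^ 2 - 1 / w ^ 2) := by
  have heq : (logDeriv fun z => elementaryFactor (z / w)) =ᶠ[𝓝 z]
      fun z => (z - w)⁻¹ + 1 / w + z / w ^ 2 := by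
    filter_upwards [isOpen_ne.mem_nhds hzw] with u hu using logDeriv_elementaryFactor_div hw hu
  have hinv := ((hasDerivAt_id' z).sub_const w).fun_inv (sub_ne_zero.mpr hzw)
  rw [heq.deriv_eq,
    ((hinv.add_const (1 / w)).fun_add ((hasDerivAt_id' z).div_const (w ^ 2))).deriv]
  ring

section Zeta

variable (L : PeriodPair)

lemma isOpen_compl_lattice : IsOpen (L.lattice : Set ℂ)ᶜ := L.isClosed_lattice.isOpen_compl

lemma div_ne_one_of_notMem_lattice {z : ℂ} (hz : z ∉ L.lattice) (l : L.lattice) :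
    z / (l : ℂ) ≠ 1 :=
  fun h => hz (eq_of_div_eq_one h ▸ l.2)

lemma deriv_logDeriv_prod_elementaryFactor {z : ℂ} (hz : z ∉ L.lattice) (s : Finset L.lattice) :
    deriv (logDeriv fun z => ∏ l ∈ s, elementaryFactor (z / l)) z =
      ∑ l ∈ s, -(if (l : ℂ) = 0 then 0 else 1 / (z - l) ^ 2 - 1 / (l : ℂ) ^ 2) := by
  have hd (l : ℂ) : Differentiable ℂ fun z => elementaryFactor (z / l) :=
    differentiable_elementaryFactor.comp (by fun_prop)
  have hne {u : ℂ} (hu : u ∉ L.lattice) (l : L.lattice) : elementaryFactor (u / l) ≠ 0 :=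
    elementaryFactor_eq_zero_iff.not.mpr (div_ne_one_of_notMem_lattice L hu l)
  have heq : (logDeriv fun z => ∏ l ∈ s, elementaryFactor (z / l)) =ᶠ[𝓝 z]
      fun z => ∑ l ∈ s, logDeriv (fun z => elementaryFactor (z / l)) z := by
    filter_upwards [(isOpen_compl_lattice L).mem_nhds hz] with u hu
    exact logDeriv_prod (fun l _ => hne hu l) fun l _ => hd l u
  have hdlog (l : L.lattice) :
      DifferentiableAt ℂ (logDeriv fun z => elementaryFactor (z / l)) z :=
    ((hd l).deriv z).div (hd l z) (hne hz l)
  rw [heq.deriv_eq, deriv_fun_sum fun l _ => hdlog l]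
  refine Finset.sum_congr rfl fun l _ => ?_
  split_ifs with hl
  · simp [hl, logDeriv_const]
  · exact deriv_logDeriv_elementaryFactor_div hl fun h => hz (h ▸ l.2)

lemma deriv_logDeriv_latticeProd {z : ℂ} (hz : z ∉ L.lattice) :
    deriv (logDeriv (latticeProd L)) z = -L.weierstrassPExcept 0 z := by
  have hprod (s : Finset L.lattice) : ∏ l ∈ s, elementaryFactor (z / l) ≠ 0 :=
    Finset.prod_ne_zero_iff.mpr fun l _ =>
      elementaryFactor_eq_zero_iff.not.mpr (div_ne_one_of_notMem_lattice L hz l)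
  refine tendsto_nhds_unique
    (tendsto_deriv_logDeriv isOpen_univ (Set.mem_univ z)
      (hasProdLocallyUniformlyOn_latticeProd L) (differentiableOn_prod_elementaryFactor L)
      hprod fun h => hz ((latticeProd_eq_zero_iff L).mp h).1)
    ((L.hasSum_weierstrassPExcept 0 z).neg.congr fun s => ?_)
  exact (deriv_logDeriv_prod_elementaryFactor L hz s).symm

lemma isPreconnected_compl_lattice : IsPreconnected (L.lattice : Set ℂ)ᶜ := by
  have : Countable L.lattice := L.latticeEquivProd.injective.countable
  refine (Set.Countable.isPathConnected_compl_of_one_lt_rank ?_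
    (Set.to_countable (L.lattice : Set ℂ))).isConnected.isPreconnected
  simp [Complex.rank_real_complex]

lemma wZeta_eq {z : ℂ} (hz : z ∉ L.lattice) :
    wZeta L.ω₁ L.ω₂ z = z⁻¹ + logDeriv (latticeProd L) z := by
  have hz0 : z ≠ 0 := by rintro rfl; exact hz L.lattice.zero_mem
  have hP : latticeProd L z ≠ 0 := fun h => hz ((latticeProd_eq_zero_iff L).mp h).1
  change logDeriv (wSigma L.ω₁ L.ω₂) z = _
  rw [funext (wSigma_eq L), logDeriv_mul z hz0 hP (by fun_prop) (differentiable_latticeProd L z),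
    logDeriv_id', one_div]

lemma hasDerivAt_wZeta {z : ℂ} (hz : z ∉ L.lattice) :
    HasDerivAt (wZeta L.ω₁ L.ω₂) (-L.weierstrassP z) z := by
  have hP := differentiable_latticeProd L
  have hz0 : z ≠ 0 := by rintro rfl; exact hz L.lattice.zero_mem
  have heq : wZeta L.ω₁ L.ω₂ =ᶠ[𝓝 z] fun z => z⁻¹ + logDeriv (latticeProd L) z := by
    filter_upwards [(isOpen_compl_lattice L).mem_nhds hz] with u hu using wZeta_eq L hu
  have hlog : HasDerivAt (logDeriv (latticeProd L)) (-L.weierstrassPExcept 0 z) z :=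
    deriv_logDeriv_latticeProd L hz ▸ ((hP.deriv z).div (hP z)
      fun h => hz ((latticeProd_eq_zero_iff L).mp h).1).hasDerivAt
  refine (((hasDerivAt_inv hz0).fun_add hlog).congr_of_eventuallyEq heq).congr_deriv ?_
  rw [← L.weierstrassPExcept_add 0 z, ZeroMemClass.coe_zero]
  ring

lemma exists_wZeta_add {l : ℂ} (hl : l ∈ L.lattice) :
    ∃ η, ∀ z ∉ L.lattice, wZeta L.ω₁ L.ω₂ (z + l) = wZeta L.ω₁ L.ω₂ z + η := by
  have hmem {z : ℂ} (hz : z ∉ L.lattice) : z + l ∉ L.lattice :=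
    fun h => hz ((L.lattice.add_mem_iff_left hl).mp h)
  have hderiv (z : ℂ) (hz : z ∈ (L.lattice : Set ℂ)ᶜ) :
      HasDerivAt (fun z => wZeta L.ω₁ L.ω₂ (z + l) - wZeta L.ω₁ L.ω₂ z) 0 z := by
    have hshift := (hasDerivAt_wZeta L (hmem hz)).comp_add_const z l
    refine (hshift.fun_sub (hasDerivAt_wZeta L hz)).congr_deriv ?_
    rw [L.weierstrassP_add_coe z ⟨l, hl⟩, sub_self]
  obtain ⟨η, hη⟩ := (isOpen_compl_lattice L).exists_is_const_of_deriv_eq_zero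
    (isPreconnected_compl_lattice L)
    (fun z hz => (hderiv z hz).differentiableAt.differentiableWithinAt)
    fun z hz => (hderiv z hz).deriv
  exact ⟨η, fun z hz => sub_eq_iff_eq_add'.mp (hη z hz)⟩

lemma wZeta_neg (z : ℂ) : wZeta L.ω₁ L.ω₂ (-z) = -wZeta L.ω₁ L.ω₂ z := by
  have h := deriv_comp_neg (wSigma L.ω₁ L.ω₂) z
  simp only [wSigma_neg, deriv.fun_neg, neg_inj] at h
  rw [wZeta, wZeta, wSigma_neg, ← h, div_neg]

lemma wZeta_add {l z : ℂ} (hl : l ∈ L.lattice) (hl2 : l / 2 ∉ L.lattice) (hz : z ∉ L.lattice) :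
    wZeta L.ω₁ L.ω₂ (z + l) = wZeta L.ω₁ L.ω₂ z + 2 * wZeta L.ω₁ L.ω₂ (l / 2) := by
  obtain ⟨η, hη⟩ := exists_wZeta_add L hl
  have hhalf := hη (-(l / 2)) (by rwa [neg_mem_iff])
  rw [wZeta_neg, show -(l / 2) + l = l / 2 by ring] at hhalf
  rw [hη z hz]
  linear_combination -hhalf

lemma exists_wSigma_add_of_wZeta_add {l η : ℂ} (hl : l ∈ L.lattice)
    (hη : ∀ z ∉ L.lattice, wZeta L.ω₁ L.ω₂ (z + l) = wZeta L.ω₁ L.ω₂ z + η) :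
    ∃ c ≠ 0, ∀ z, wSigma L.ω₁ L.ω₂ (z + l) = c * (exp (η * z) * wSigma L.ω₁ L.ω₂ z) := by
  have hmem (z : ℂ) : z + l ∈ L.lattice ↔ z ∈ L.lattice := L.lattice.add_mem_iff_left hl
  have hσ := differentiable_wSigma L
  have hσ0 {z : ℂ} (hz : z ∉ L.lattice) : wSigma L.ω₁ L.ω₂ z ≠ 0 :=
    (wSigma_eq_zero_iff L).not.mpr hz
  have hlog : Set.EqOn (logDeriv fun z => wSigma L.ω₁ L.ω₂ (z + l))
      (logDeriv fun z => exp (η * z) * wSigma L.ω₁ L.ω₂ z) (L.lattice : Set ℂ)ᶜ := by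
    intro z hz
    have hexp : HasDerivAt (fun z => exp (η * z)) (exp (η * z) * η) z := by
      simpa using ((hasDerivAt_id' z).const_mul η).cexp
    calc logDeriv (fun z => wSigma L.ω₁ L.ω₂ (z + l)) z
        = wZeta L.ω₁ L.ω₂ (z + l) := by rw [logDeriv_apply, deriv_comp_add_const, wZeta]
      _ = η + wZeta L.ω₁ L.ω₂ z := by rw [hη z hz, add_comm]
      _ = logDeriv (fun z => exp (η * z)) z + logDeriv (wSigma L.ω₁ L.ω₂) z := by
          rw [logDeriv_apply, hexp.deriv, mul_div_cancel_left₀ _ (exp_ne_zero _)]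
          rfl
      _ = logDeriv (fun z => exp (η * z) * wSigma L.ω₁ L.ω₂ z) z :=
          (logDeriv_mul (f := fun z => exp (η * z)) (g := wSigma L.ω₁ L.ω₂) z (exp_ne_zero _)
            (hσ0 hz) (by fun_prop) (hσ z)).symm
  obtain ⟨c, hc, heq⟩ := (logDeriv_eqOn_iff (by fun_prop) (by fun_prop) (isOpen_compl_lattice L)
    (isPreconnected_compl_lattice L) (fun z hz => mul_ne_zero (exp_ne_zero _) (hσ0 hz))
    fun z hz => hσ0 ((hmem z).not.mpr hz)).mp hlog
  refine ⟨c, hc, fun z => ?_⟩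
  by_cases hz : z ∈ L.lattice
  · simp only [(wSigma_eq_zero_iff L).mpr hz, (wSigma_eq_zero_iff L).mpr ((hmem z).mpr hz),
      mul_zero]
  · exact heq hz

-- The constant of the previous lemma is read off at `z = -l / 2`, where `σ` is odd.
lemma wSigma_add {l : ℂ} (hl : l ∈ L.lattice) (hl2 : l / 2 ∉ L.lattice) (z : ℂ) :
    wSigma L.ω₁ L.ω₂ (z + l) =
      -exp (2 * wZeta L.ω₁ L.ω₂ (l / 2) * (z + l / 2)) * wSigma L.ω₁ L.ω₂ z := by
  obtain ⟨c, -, h⟩ := exists_wSigma_add_of_wZeta_add L hl fun z hz => wZeta_add L hl hl2 hz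
  set η := 2 * wZeta L.ω₁ L.ω₂ (l / 2)
  have hσ : wSigma L.ω₁ L.ω₂ (l / 2) ≠ 0 := (wSigma_eq_zero_iff L).not.mpr hl2
  have hc : c * exp (η * -(l / 2)) = -1 := by
    have hhalf := h (-(l / 2))
    rw [wSigma_neg, show -(l / 2) + l = l / 2 by ring] at hhalf
    exact mul_right_cancel₀ hσ (by linear_combination hhalf)
  have hexp : exp (η * z) = exp (η * -(l / 2)) * exp (η * (z + l / 2)) := by
    rw [← exp_add]
    ring_nf
  rw [h, hexp]
  linear_combination exp (η * (z + l / 2)) * wSigma L.ω₁ L.ω₂ z * hc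

lemma deriv_wSigma_ne_zero {l : ℂ} (hl : l ∈ L.lattice) : deriv (wSigma L.ω₁ L.ω₂) l ≠ 0 := by
  obtain ⟨η, hη⟩ := exists_wZeta_add L hl
  obtain ⟨c, hc, h⟩ := exists_wSigma_add_of_wZeta_add L hl hη
  have hder : deriv (fun z => wSigma L.ω₁ L.ω₂ (z + l)) 0 = c := by
    rw [funext h, deriv_const_mul_field, deriv_fun_mul (by fun_prop) (differentiable_wSigma L 0)]
    simp [wSigma_zero, deriv_wSigma_zero]
  rw [deriv_comp_add_const, zero_add] at hder
  exact hder ▸ hc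

end Zeta

/-! ### Entire functions -/

lemma eq_of_forall_mul_eq_mul {f g p : ℂ → ℂ} (hf : Differentiable ℂ f)
    (hg : Differentiable ℂ g) {x : ℂ} (hp : ContinuousAt p x) (hx : p x ≠ 0)
    (h : ∀ z, f z * p z = g z * p z) : f = g := by
  refine AnalyticOnNhd.eq_of_eventuallyEq (fun z _ => hf.analyticAt z)
    (fun z _ => hg.analyticAt z) (z₀ := x) ?_
  filter_upwards [hp.eventually_ne hx] with z hz using mul_right_cancel₀ hz (h z)

lemma differentiable_dslope {f : ℂ → ℂ} (hf : Differentiable ℂ f) (w : ℂ) :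
    Differentiable ℂ (dslope f w) :=
  differentiableOn_univ.mp <|
    (Complex.differentiableOn_dslope univ_mem).mpr hf.differentiableOn

lemma dslope_div_dslope {f g : ℂ → ℂ} {w z : ℂ} (hf : f w = 0) (hg : g w = 0) (hz : z ≠ w) :
    dslope f w z / dslope g w z = f z / g z := by
  rw [dslope_of_ne _ hz, dslope_of_ne _ hz, slope_def_field, slope_def_field, hf, hg, sub_zero,
    sub_zero, div_div_div_cancel_right₀ (sub_ne_zero.mpr hz)]

/-- The quotient `f / g`, given at the zeros of `g` the value that l'Hôpital's rule predicts when
those zeros are simple. -/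
noncomputable def entireQuotient (f g : ℂ → ℂ) (z : ℂ) : ℂ :=
  if g z = 0 then deriv f z / deriv g z else f z / g z

lemma entireQuotient_mul {f g : ℂ → ℂ} (h : ∀ z, g z = 0 → f z = 0) (z : ℂ) :
    entireQuotient f g z * g z = f z := by
  by_cases hz : g z = 0 <;> simp [entireQuotient, hz, h]

lemma differentiable_entireQuotient {f g : ℂ → ℂ} (hf : Differentiable ℂ f)
    (hg : Differentiable ℂ g) (h : ∀ z, g z = 0 → f z = 0)
    (hsimple : ∀ z, g z = 0 → deriv g z ≠ 0) : Differentiable ℂ (entireQuotient f g) := by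
  intro w
  by_cases hw : g w = 0
  · have hf' := differentiable_dslope hf w
    have hg' := differentiable_dslope hg w
    have hne : dslope g w w ≠ 0 := by rw [dslope_same]; exact hsimple w hw
    refine ((hf' w).fun_div (hg' w) hne).congr_of_eventuallyEq ?_
    filter_upwards [(hg' w).continuousAt.eventually_ne hne] with z hz
    rcases eq_or_ne z w with rfl | hzw
    · rw [entireQuotient, if_pos hw, dslope_same, dslope_same]
    · have hgz : g z ≠ 0 := fun h0 => hz <| by
        rw [dslope_of_ne _ hzw, slope_def_field, h0, hw, sub_zero, zero_div]
      rw [entireQuotient, if_neg hgz, dslope_div_dslope (h w hw) hw hzw]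
  · refine ((hf w).fun_div (hg w) hw).congr_of_eventuallyEq ?_
    filter_upwards [(hg w).continuousAt.eventually_ne hw] with z hz
    rw [entireQuotient, if_neg hz]

/-! ### Theta functions of a lattice -/

/-- Translation by `ω` multiplies `G` by the exponential of the affine function `a * z + b`. -/
def IsQuasiPeriodic (G : ℂ → ℂ) (ω a b : ℂ) : Prop := ∀ z, G (z + ω) = exp (a * z + b) * G z

namespace IsQuasiPeriodic

variable {G H : ℂ → ℂ} {ω ω' a a' b b' : ℂ}

lemma mul (hG : IsQuasiPeriodic G ω a b) (hH : IsQuasiPeriodic H ω a' b') :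
    IsQuasiPeriodic (fun z => G z * H z) ω (a + a') (b + b') := by
  intro z
  beta_reduce
  rw [hG, hH, show (a + a') * z + (b + b') = (a * z + b) + (a' * z + b') by ring,
    exp_add (a * z + b)]
  ring

lemma of_mul {x : ℂ} (hH : IsQuasiPeriodic H ω a' b') (hGd : Differentiable ℂ G)
    (hHx : ContinuousAt H x) (hx : H x ≠ 0)
    (hGH : IsQuasiPeriodic (fun z => G z * H z) ω (a + a') (b + b')) :
    IsQuasiPeriodic G ω a b := by
  refine congrFun (eq_of_forall_mul_eq_mul (f := fun z => G (z + ω))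
    (g := fun z => exp (a * z + b) * G z) (by fun_prop) (by fun_prop) hHx hx fun z => ?_)
  refine mul_right_cancel₀ (exp_ne_zero (a' * z + b')) ?_
  calc G (z + ω) * H z * exp (a' * z + b') = G (z + ω) * H (z + ω) := by rw [hH]; ring
    _ = exp ((a * z + b) + (a' * z + b')) * (G z * H z) :=
        (hGH z).trans (by ring_nf)
    _ = exp (a * z + b) * G z * H z * exp (a' * z + b') := by rw [exp_add]; ring

lemma exp_quadratic (c β ω : ℂ) :
    IsQuasiPeriodic (fun z => exp (c * z ^ 2 + β * z)) ω (2 * c * ω) (c * ω ^ 2 + β * ω) := by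
  intro z
  rw [← exp_add]
  ring_nf

lemma apply_add_eq_zero_iff (hG : IsQuasiPeriodic G ω a b) (z : ℂ) : G (z + ω) = 0 ↔ G z = 0 := by
  simp [hG z]

lemma periodic_norm (hG : IsQuasiPeriodic G ω 0 b) (hb : b.re = 0) :
    Function.Periodic (fun z => ‖G z‖) ω := by
  intro z
  simp [hG z, norm_exp, hb]

-- Both orders of translating by `ω` and `ω'` produce the same exponential factor.
lemma exists_int (hG : IsQuasiPeriodic G ω a b) (hG' : IsQuasiPeriodic G ω' a' b') {x : ℂ}
    (hx : G x ≠ 0) : ∃ k : ℤ, a * ω' - a' * ω = 2 * Real.pi * I * k := by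
  have hcomm : exp (a * (x + ω') + b + (a' * x + b')) = exp (a' * (x + ω) + b' + (a * x + b)) := by
    refine mul_right_cancel₀ hx ?_
    rw [exp_add, exp_add (_ + b'), mul_assoc, mul_assoc, ← hG, ← hG', ← hG, ← hG', add_right_comm]
  obtain ⟨k, hk⟩ := exp_eq_exp_iff_exists_int.mp hcomm
  exact ⟨k, by linear_combination hk⟩

end IsQuasiPeriodic

section Lattice

variable (L : PeriodPair)

lemma ω₁_ne_zero : L.ω₁ ≠ 0 := fun h => L.ω₁_div_two_notMem_lattice (by simp [h])

lemma periodic_of_mem_lattice {β : Type*} {f : ℂ → β} (h₁ : Function.Periodic f L.ω₁)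
    (h₂ : Function.Periodic f L.ω₂) {l : ℂ} (hl : l ∈ L.lattice) : Function.Periodic f l := by
  obtain ⟨m, n, rfl⟩ := PeriodPair.mem_lattice.mp hl
  exact (h₁.int_mul m).add_period (h₂.int_mul n)

lemma apply_eq_apply_of_periodic_norm {G : ℂ → ℂ} (hG : Differentiable ℂ G)
    (h₁ : Function.Periodic (fun z => ‖G z‖) L.ω₁) (h₂ : Function.Periodic (fun z => ‖G z‖) L.ω₂)
    (z w : ℂ) : G z = G w := by
  refine hG.apply_eq_apply_of_bounded ?_ z w
  have hcompact : IsCompact (closure (ZSpan.fundamentalDomain L.basis)) :=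
    (ZSpan.fundamentalDomain_isBounded L.basis).isCompact_closure
  obtain ⟨C, hC⟩ := hcompact.exists_bound_of_continuousOn hG.continuous.continuousOn
  refine isBounded_iff_forall_norm_le.mpr ⟨C, ?_⟩
  rintro _ ⟨u, rfl⟩
  have hfloor : (ZSpan.floor L.basis u : ℂ) ∈ L.lattice := by
    rw [L.lattice_eq_span_range_basis]
    exact (ZSpan.floor L.basis u).2
  calc ‖G u‖ = ‖G (ZSpan.fract L.basis u + ZSpan.floor L.basis u)‖ := by
        rw [ZSpan.fract_apply, sub_add_cancel]
    _ = ‖G (ZSpan.fract L.basis u)‖ := periodic_of_mem_lattice L h₁ h₂ hfloor _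
    _ ≤ C := hC _ (subset_closure (ZSpan.fract_mem_fundamentalDomain L.basis u))

lemma exists_re_mul_eq (r₁ r₂ : ℝ) : ∃ β : ℂ, (β * L.ω₁).re = r₁ ∧ (β * L.ω₂).re = r₂ := by
  set f : ℂ →ₗ[ℝ] ℝ := L.basis.constr ℝ ![r₁, r₂]
  have hre (w : ℂ) : ((f 1 - f I * I : ℂ) * w).re = f w := by
    conv_rhs => rw [← re_add_im w, ← mul_one (w.re : ℂ), ← real_smul, ← real_smul, map_add,
      map_smul, map_smul]
    simp only [mul_re, sub_re, ofReal_re, I_re, mul_zero, ofReal_im, I_im, mul_one, sub_self,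
      sub_zero, sub_im, mul_im, add_zero, zero_sub, neg_mul, sub_neg_eq_add, smul_eq_mul]
    ring
  refine ⟨f 1 - f I * I, ?_, ?_⟩
  · rw [hre, ← L.basis_zero, L.basis.constr_basis]; rfl
  · rw [hre, ← L.basis_one, L.basis.constr_basis]; rfl

/-- Theta functions of degree `k`: entire functions, quasi-periodic along both periods, whose
exponents `a₁ * z + b₁` and `a₂ * z + b₂` satisfy `a₁ ω₂ - a₂ ω₁ = 2πi k`. If `(ω₁, ω₂)` is
positively oriented and the function is not identically zero, `k` counts the zeros modulo the
lattice. -/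
structure IsTheta (k : ℤ) (G : ℂ → ℂ) : Prop where
  differentiable : Differentiable ℂ G
  exists_isQuasiPeriodic : ∃ a₁ b₁ a₂ b₂,
    IsQuasiPeriodic G L.ω₁ a₁ b₁ ∧ IsQuasiPeriodic G L.ω₂ a₂ b₂ ∧
      a₁ * L.ω₂ - a₂ * L.ω₁ = 2 * Real.pi * I * k

namespace IsTheta

variable {L} {k m : ℤ} {G H : ℂ → ℂ}

lemma mul (hG : IsTheta L k G) (hH : IsTheta L m H) : IsTheta L (k + m) fun z => G z * H z := by
  obtain ⟨hGd, a₁, b₁, a₂, b₂, hG₁, hG₂, hk⟩ := hG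
  obtain ⟨hHd, c₁, d₁, c₂, d₂, hH₁, hH₂, hm⟩ := hH
  refine ⟨hGd.mul hHd, _, _, _, _, hG₁.mul hH₁, hG₂.mul hH₂, ?_⟩
  push_cast
  linear_combination hk + hm

lemma one : IsTheta L 0 fun _ => 1 :=
  ⟨by fun_prop, 0, 0, 0, 0, fun z => by simp, fun z => by simp, by simp⟩

lemma pow (hG : IsTheta L k G) (n : ℕ) : IsTheta L (n * k) fun z => G z ^ n := by
  induction n with
  | zero => simpa using one
  | succ n ih =>
    simp only [pow_succ]
    rw [Nat.cast_succ, add_one_mul]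
    exact ih.mul hG

lemma of_mul {x : ℂ} (hGd : Differentiable ℂ G) (hH : IsTheta L m H) (hx : H x ≠ 0)
    (hGH : IsTheta L k fun z => G z * H z) : IsTheta L (k - m) G := by
  obtain ⟨-, a₁, b₁, a₂, b₂, h₁, h₂, hk⟩ := hGH
  obtain ⟨hHd, c₁, d₁, c₂, d₂, hH₁, hH₂, hm⟩ := hH
  have hHc := hHd.continuous.continuousAt (x := x)
  refine ⟨hGd, a₁ - c₁, b₁ - d₁, a₂ - c₂, b₂ - d₂, hH₁.of_mul hGd hHc hx ?_,
    hH₂.of_mul hGd hHc hx ?_, ?_⟩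
  · simpa only [sub_add_cancel] using h₁
  · simpa only [sub_add_cancel] using h₂
  · push_cast
    linear_combination hk - hm

lemma apply_eq_zero_iff_of_sub_mem (hG : IsTheta L k G) {z w : ℂ} (h : z - w ∈ L.lattice) :
    G z = 0 ↔ G w = 0 := by
  obtain ⟨-, a₁, b₁, a₂, b₂, h₁, h₂, -⟩ := hG
  have hper := periodic_of_mem_lattice L (f := fun z => G z = 0)
    (fun z => propext (h₁.apply_add_eq_zero_iff z))
    (fun z => propext (h₂.apply_add_eq_zero_iff z)) h w
  rw [add_sub_cancel] at hper
  exact iff_of_eq hper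

-- In degree zero, multiplying `G` by a suitable `exp (-c z² / 2 + β z)` makes `|G|` periodic.
lemma eq_zero_of_degree_zero (hG : IsTheta L 0 G) {x : ℂ} (hx : G x = 0) (z : ℂ) : G z = 0 := by
  obtain ⟨hGd, a₁, b₁, a₂, b₂, h₁, h₂, hk⟩ := hG
  have hω₁ := ω₁_ne_zero L
  set c := a₁ / L.ω₁
  have hc₁ : a₁ + 2 * (-c / 2) * L.ω₁ = 0 := by
    linear_combination -(div_mul_cancel₀ a₁ hω₁)
  have hc₂ : a₂ + 2 * (-c / 2) * L.ω₂ = 0 := by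
    refine (mul_eq_zero.mp ?_).resolve_left hω₁
    rw [Int.cast_zero, mul_zero] at hk
    linear_combination -hk + L.ω₂ * hc₁
  obtain ⟨β, hβ₁, hβ₂⟩ :=
    exists_re_mul_eq L (-(b₁ + -c / 2 * L.ω₁ ^ 2).re) (-(b₂ + -c / 2 * L.ω₂ ^ 2).re)
  have hH₁ := h₁.mul (.exp_quadratic (-c / 2) β L.ω₁)
  have hH₂ := h₂.mul (.exp_quadratic (-c / 2) β L.ω₂)
  rw [hc₁, ← add_assoc] at hH₁
  rw [hc₂, ← add_assoc] at hH₂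
  have hconst := apply_eq_apply_of_periodic_norm L (by fun_prop)
    (hH₁.periodic_norm (by rw [add_re, hβ₁, add_neg_cancel]))
    (hH₂.periodic_norm (by rw [add_re, hβ₂, add_neg_cancel])) z x
  simpa [hx] using hconst

end IsTheta

end Lattice

/-! ### The Jacobi theta function -/

lemma intervalIntegral_jacobiTheta₂_term (n : ℤ) (τ : ℂ) :
    ∫ x in (0 : ℝ)..1, jacobiTheta₂_term n x τ = if n = 0 then 1 else 0 := by
  split_ifs with hn
  · simp [jacobiTheta₂_term, hn]
  · have hc : 2 * Real.pi * I * n ≠ 0 := mul_ne_zero two_pi_I_ne_zero (Int.cast_ne_zero.mpr hn)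
    have hexp : exp (2 * Real.pi * I * n) = 1 := by
      rw [mul_comm]
      exact exp_int_mul_two_pi_mul_I n
    simp only [jacobiTheta₂_term, exp_add]
    rw [intervalIntegral.integral_mul_const, integral_exp_mul_complex hc]
    simp [hexp]

lemma intervalIntegral_jacobiTheta₂ {τ : ℂ} (hτ : 0 < τ.im) :
    ∫ x in (0 : ℝ)..1, jacobiTheta₂ x τ = 1 := by
  let f (n : ℤ) : C(ℝ, ℂ) := ⟨fun x => jacobiTheta₂_term n x τ, by
    unfold jacobiTheta₂_term
    fun_prop⟩
  have hnorm (n : ℤ) :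
      ‖(f n).restrict (⟨Set.uIcc 0 1, isCompact_uIcc⟩ : TopologicalSpace.Compacts ℝ)‖ ≤
        ‖jacobiTheta₂_term n 0 τ‖ := by
    refine (ContinuousMap.norm_le _ (norm_nonneg _)).mpr fun x => ?_
    simp [f, norm_jacobiTheta₂_term]
  have hsum := intervalIntegral.hasSum_intervalIntegral_of_summable_norm <|
    ((summable_jacobiTheta₂_term_iff 0 τ).mpr hτ).norm.of_nonneg_of_le
      (fun _ => norm_nonneg _) hnorm
  have hone := hasSum_ite_eq (0 : ℤ) (1 : ℂ)
  simp only [← intervalIntegral_jacobiTheta₂_term _ τ] at hone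
  exact hsum.unique hone

lemma exists_jacobiTheta₂_ne_zero {τ : ℂ} (hτ : 0 < τ.im) : ∃ z, jacobiTheta₂ z τ ≠ 0 := by
  by_contra! h
  simpa [h] using intervalIntegral_jacobiTheta₂ hτ

lemma jacobiTheta₂_half_eq_zero (τ : ℂ) : jacobiTheta₂ ((1 + τ) / 2) τ = 0 := by
  have h := jacobiTheta₂_add_left' (-((1 + τ) / 2)) τ
  rw [← jacobiTheta₂_add_left, jacobiTheta₂_neg_left,
    show -((1 + τ) / 2) + τ + 1 = (1 + τ) / 2 by ring,
    show -Real.pi * I * (τ + 2 * -((1 + τ) / 2)) = Real.pi * I by ring, exp_pi_mul_I] at h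
  linear_combination h / 2

section Oriented

variable {L : PeriodPair}

variable (L) in
/-- The Jacobi theta function of the lattice, translated so that it vanishes on the lattice. -/
noncomputable def latticeTheta (z : ℂ) : ℂ :=
  jacobiTheta₂ (z / L.ω₁ + (1 + L.ω₂ / L.ω₁) / 2) (L.ω₂ / L.ω₁)

lemma latticeTheta_zero : latticeTheta L 0 = 0 := by
  rw [latticeTheta, zero_div, zero_add, jacobiTheta₂_half_eq_zero]

lemma isTheta_latticeTheta (hL : 0 < (L.ω₂ / L.ω₁).im) : IsTheta L 1 (latticeTheta L) := by
  have hω₁ := ω₁_ne_zero L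
  have hd : Differentiable ℂ fun u => jacobiTheta₂ u (L.ω₂ / L.ω₁) :=
    fun u => differentiableAt_jacobiTheta₂_fst u hL
  refine ⟨hd.comp (by fun_prop), 0, 0, -2 * Real.pi * I / L.ω₁,
    -Real.pi * I * (1 + 2 * (L.ω₂ / L.ω₁)), fun z => ?_, fun z => ?_, ?_⟩
  · rw [latticeTheta, add_div, div_self hω₁, add_right_comm, jacobiTheta₂_add_left]
    simp [latticeTheta]
  · rw [latticeTheta, add_div, add_right_comm, jacobiTheta₂_add_left', latticeTheta]
    ring_nf
  · field_simp
    push_cast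
    ring

lemma exists_latticeTheta_ne_zero (hL : 0 < (L.ω₂ / L.ω₁).im) : ∃ z, latticeTheta L z ≠ 0 := by
  obtain ⟨z, hz⟩ := exists_jacobiTheta₂_ne_zero hL
  refine ⟨(z - (1 + L.ω₂ / L.ω₁) / 2) * L.ω₁, ?_⟩
  rwa [latticeTheta, mul_div_cancel_right₀ _ (ω₁_ne_zero L), sub_add_cancel]

namespace IsTheta

variable {k : ℤ} {G : ℂ → ℂ}

lemma eq_zero_of_nonpos (hL : 0 < (L.ω₂ / L.ω₁).im) (hG : IsTheta L k G) (hk : k ≤ 0) {x : ℂ}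
    (hx : G x = 0) : G = 0 := by
  obtain ⟨n, rfl⟩ := Int.exists_eq_neg_ofNat hk
  obtain ⟨y, hy⟩ := exists_latticeTheta_ne_zero hL
  have hpow := (isTheta_latticeTheta hL).pow n
  have hmul := hG.mul hpow
  rw [mul_one, neg_add_cancel] at hmul
  refine eq_of_forall_mul_eq_mul hG.differentiable (differentiable_const 0)
    hpow.differentiable.continuous.continuousAt (pow_ne_zero n hy) fun z => ?_
  rw [Pi.zero_apply, zero_mul]
  exact hmul.eq_zero_of_degree_zero (x := x) (by rw [hx, zero_mul]) z

lemma eq_zero_of_neg (hL : 0 < (L.ω₂ / L.ω₁).im) (hG : IsTheta L k G) (hk : k < 0) : G = 0 := by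
  obtain ⟨y, hy⟩ := exists_latticeTheta_ne_zero hL
  have hΘ := isTheta_latticeTheta hL
  have hzero := (hG.mul hΘ).eq_zero_of_nonpos hL (by lia) (x := 0)
    (by rw [latticeTheta_zero, mul_zero])
  refine eq_of_forall_mul_eq_mul hG.differentiable (differentiable_const 0)
    hΘ.differentiable.continuous.continuousAt hy fun z => ?_
  simpa using congrFun hzero z

-- If `G` had no zeros, `1 / G` would be a theta function of negative degree.
lemma exists_eq_zero_of_pos (hL : 0 < (L.ω₂ / L.ω₁).im) (hG : IsTheta L k G) (hk : 0 < k) :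
    ∃ z, G z = 0 := by
  by_contra! h
  have hinv : IsTheta L (0 - k) fun z => (G z)⁻¹ :=
    .of_mul (hG.differentiable.fun_inv h) hG (h 0) <| by
      simpa only [inv_mul_cancel₀ (h _)] using one
  exact inv_ne_zero (h 0) (congrFun (hinv.eq_zero_of_neg hL (by lia)) 0)

end IsTheta

/-! ### The Legendre relation -/

lemma isQuasiPeriodic_wSigma {l : ℂ} (hl : l ∈ L.lattice) (hl2 : l / 2 ∉ L.lattice) :
    IsQuasiPeriodic (wSigma L.ω₁ L.ω₂) l (2 * wZeta L.ω₁ L.ω₂ (l / 2))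
      (wZeta L.ω₁ L.ω₂ (l / 2) * l + Real.pi * I) := by
  intro z
  rw [wSigma_add L hl hl2, ← add_assoc, exp_add _ (Real.pi * I), exp_pi_mul_I, mul_neg_one]
  ring_nf

lemma wSigma_half_period_ne_zero : wSigma L.ω₁ L.ω₂ (L.ω₁ / 2) ≠ 0 :=
  (wSigma_eq_zero_iff L).not.mpr L.ω₁_div_two_notMem_lattice

variable (L) in
lemma exists_isTheta_wSigma : ∃ k : ℤ, IsTheta L k (wSigma L.ω₁ L.ω₂) ∧
    2 * wZeta L.ω₁ L.ω₂ (L.ω₁ / 2) * L.ω₂ - 2 * wZeta L.ω₁ L.ω₂ (L.ω₂ / 2) * L.ω₁ =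
      2 * Real.pi * I * k := by
  have h₁ := isQuasiPeriodic_wSigma L.ω₁_mem_lattice L.ω₁_div_two_notMem_lattice
  have h₂ := isQuasiPeriodic_wSigma L.ω₂_mem_lattice L.ω₂_div_two_notMem_lattice
  obtain ⟨k, hk⟩ := h₁.exists_int h₂ wSigma_half_period_ne_zero
  exact ⟨k, ⟨differentiable_wSigma L, _, _, _, _, h₁, h₂, hk⟩, hk⟩

-- The degree `k` of `σ` is positive because `σ` vanishes at `0`, and `Θ / σ` is an entire theta
-- function of degree `1 - k`, which is therefore nonnegative.
lemma eq_one_of_isTheta_wSigma (hL : 0 < (L.ω₂ / L.ω₁).im) {k : ℤ}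
    (hσ : IsTheta L k (wSigma L.ω₁ L.ω₂)) : k = 1 := by
  have hΘ := isTheta_latticeTheta hL
  have hpos : 0 < k := by
    by_contra! hk
    exact wSigma_half_period_ne_zero (congrFun (hσ.eq_zero_of_nonpos hL hk (wSigma_zero L)) _)
  have hvanish (z : ℂ) (hz : wSigma L.ω₁ L.ω₂ z = 0) : latticeTheta L z = 0 :=
    (hΘ.apply_eq_zero_iff_of_sub_mem (by simpa [wSigma_eq_zero_iff] using hz)).mpr
      latticeTheta_zero
  have hmul := entireQuotient_mul hvanish
  have hquot : IsTheta L (1 - k) (entireQuotient (latticeTheta L) (wSigma L.ω₁ L.ω₂)) :=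
    .of_mul (differentiable_entireQuotient hΘ.differentiable hσ.differentiable hvanish
      fun z hz => deriv_wSigma_ne_zero L ((wSigma_eq_zero_iff L).mp hz)) hσ
      wSigma_half_period_ne_zero (by simpa only [hmul] using hΘ)
  obtain ⟨y, hy⟩ := exists_latticeTheta_ne_zero hL
  by_contra hk
  refine hy ?_
  rw [← hmul, hquot.eq_zero_of_neg hL (by lia), Pi.zero_apply, zero_mul]

lemma legendre_relation (hL : 0 < (L.ω₂ / L.ω₁).im) :
    2 * wZeta L.ω₁ L.ω₂ (L.ω₁ / 2) * L.ω₂ - 2 * wZeta L.ω₁ L.ω₂ (L.ω₂ / 2) * L.ω₁ =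
      2 * Real.pi * I := by
  obtain ⟨k, hσ, hk⟩ := exists_isTheta_wSigma L
  rw [hk, eq_one_of_isTheta_wSigma hL hσ, Int.cast_one, mul_one]

end Oriented

/-! ### Canonical theta functions -/

/-- Canonical theta functions of degree `N` and characteristic `γ`: entire functions with the
factors of automorphy `(-1)^N exp (N (2 ω̄ z + |ω|²) + 2 (γ̄ ω - ω̄ γ))`, where `(-1)^N` is encoded
as `exp (N π i)`. These are the functions `exp (N |z|²) F z` for `F` in the fiber
`ψpol_N^γ(ℂ/Λ)`. -/
structure IsCanonicalTheta (L : PeriodPair) (N : ℕ) (γ : ℂ) (G : ℂ → ℂ) : Prop where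
  differentiable : Differentiable ℂ G
  isQuasiPeriodic : ∀ ω ∈ ({L.ω₁, L.ω₂} : Set ℂ), IsQuasiPeriodic G ω (2 * N * conj ω)
    (N * (conj ω * ω + Real.pi * I) + 2 * (conj γ * ω - conj ω * γ))

/-- The holomorphic counterpart `exp (|z|²) π_α(z)` of the pseudopolynomial `π_α`. -/
noncomputable def canonicalSigma (L : PeriodPair) (α z : ℂ) : ℂ :=
  exp (2 * conj α * z - conj α * α) * sigmaStar L.ω₁ L.ω₂ (z - α)

section Canonical

variable {L : PeriodPair}

lemma im_div_pos_of_area (harea : conj L.ω₁ * L.ω₂ - conj L.ω₂ * L.ω₁ = Real.pi * I) :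
    0 < (L.ω₂ / L.ω₁).im := by
  have him := congrArg im harea
  simp only [sub_im, mul_im, conj_re, conj_im, ofReal_re, ofReal_im, I_re, I_im] at him
  rw [div_im, ← sub_div]
  exact div_pos (by linarith [Real.pi_pos]) (normSq_pos.mpr (ω₁_ne_zero L))

lemma mem_lattice_iff_exp_eq_one (harea : conj L.ω₁ * L.ω₂ - conj L.ω₂ * L.ω₁ = Real.pi * I)
    {γ : ℂ} : γ ∈ L.lattice ↔
      ∀ ω ∈ ({L.ω₁, L.ω₂} : Set ℂ), exp (2 * (conj γ * ω - conj ω * γ)) = 1 := by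
  obtain ⟨a, b, rfl⟩ : ∃ a b : ℝ, γ = a * L.ω₁ + b * L.ω₂ :=
    ⟨L.basis.repr γ 0, L.basis.repr γ 1, by simpa using (L.basis.sum_repr γ).symm⟩
  have h₁ : 2 * (conj (a * L.ω₁ + b * L.ω₂) * L.ω₁ - conj L.ω₁ * (a * L.ω₁ + b * L.ω₂)) =
      -b * (2 * Real.pi * I) := by
    simp only [map_add, map_mul, conj_ofReal]
    linear_combination -2 * b * harea
  have h₂ : 2 * (conj (a * L.ω₁ + b * L.ω₂) * L.ω₂ - conj L.ω₂ * (a * L.ω₁ + b * L.ω₂)) =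
      a * (2 * Real.pi * I) := by
    simp only [map_add, map_mul, conj_ofReal]
    linear_combination 2 * a * harea
  simp only [Set.mem_insert_iff, Set.mem_singleton_iff, forall_eq_or_imp, forall_eq, h₁, h₂,
    exp_eq_one_iff, mul_left_inj' two_pi_I_ne_zero]
  constructor
  · intro h
    obtain ⟨m, n, hmn⟩ := PeriodPair.mem_lattice.mp h
    have hli := LinearIndependent.pair_iff.mp L.indep (m - a) (n - b) <| by
      simp only [real_smul]
      push_cast
      linear_combination hmn
    exact ⟨⟨-n, by rw [← sub_eq_zero.mp hli.2]; simp⟩, ⟨m, by rw [← sub_eq_zero.mp hli.1]; simp⟩⟩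
  · rintro ⟨⟨n, hn⟩, m, hm⟩
    exact PeriodPair.mem_lattice.mpr ⟨m, -n, by rw [hm, ← neg_eq_iff_eq_neg.mpr hn.symm]; simp⟩

namespace IsCanonicalTheta

variable {N M : ℕ} {γ δ : ℂ} {G H : ℂ → ℂ}

lemma mul (hG : IsCanonicalTheta L N γ G) (hH : IsCanonicalTheta L M δ H) :
    IsCanonicalTheta L (N + M) (γ + δ) fun z => G z * H z := by
  refine ⟨hG.differentiable.mul hH.differentiable, fun ω hω => ?_⟩
  convert (hG.isQuasiPeriodic ω hω).mul (hH.isQuasiPeriodic ω hω) using 1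
  · push_cast
    ring
  · push_cast [map_add]
    ring

lemma of_mul {x : ℂ} (hGd : Differentiable ℂ G) (hH : IsCanonicalTheta L M δ H) (hx : H x ≠ 0)
    (hGH : IsCanonicalTheta L (N + M) γ fun z => G z * H z) :
    IsCanonicalTheta L N (γ - δ) G := by
  refine ⟨hGd, fun ω hω => (hH.isQuasiPeriodic ω hω).of_mul hGd
    hH.differentiable.continuous.continuousAt hx ?_⟩
  convert hGH.isQuasiPeriodic ω hω using 1
  · push_cast
    ring
  · push_cast [map_sub]
    ring

lemma const_mul (hG : IsCanonicalTheta L N γ G) (c : ℂ) :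
    IsCanonicalTheta L N γ fun z => c * G z := by
  refine ⟨hG.differentiable.const_mul c, fun ω hω z => ?_⟩
  rw [hG.isQuasiPeriodic ω hω, mul_left_comm]

lemma one : IsCanonicalTheta L 0 0 fun _ => 1 :=
  ⟨differentiable_const 1, fun ω _ z => by simp⟩

lemma prod {N : ℕ} {α : Fin N → ℂ} {G : Fin N → ℂ → ℂ}
    (hG : ∀ j, IsCanonicalTheta L 1 (α j) (G j)) :
    IsCanonicalTheta L N (∑ j, α j) fun z => ∏ j, G j z := by
  induction N with
  | zero => simpa using one
  | succ N ih =>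
    simp only [Fin.prod_univ_castSucc, Fin.sum_univ_castSucc]
    exact (ih fun j => hG j.castSucc).mul (hG (Fin.last N))

lemma isTheta (harea : conj L.ω₁ * L.ω₂ - conj L.ω₂ * L.ω₁ = Real.pi * I)
    (hG : IsCanonicalTheta L N γ G) : IsTheta L N G := by
  refine ⟨hG.differentiable, _, _, _, _, hG.isQuasiPeriodic L.ω₁ (by simp),
    hG.isQuasiPeriodic L.ω₂ (by simp), ?_⟩
  push_cast
  linear_combination 2 * N * harea

lemma congr_of_sub_mem (harea : conj L.ω₁ * L.ω₂ - conj L.ω₂ * L.ω₁ = Real.pi * I)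
    (hG : IsCanonicalTheta L N γ G) (h : γ - δ ∈ L.lattice) : IsCanonicalTheta L N δ G := by
  refine ⟨hG.differentiable, fun ω hω z => ?_⟩
  have hone := (mem_lattice_iff_exp_eq_one harea).mp h ω hω
  rw [hG.isQuasiPeriodic ω hω z]
  congr 1
  rw [← mul_one (exp (2 * N * conj ω * z + (_ + 2 * (conj δ * ω - conj ω * δ)))), ← hone,
    ← exp_add, map_sub]
  ring_nf

lemma mem_lattice_of_degree_zero (harea : conj L.ω₁ * L.ω₂ - conj L.ω₂ * L.ω₁ = Real.pi * I)
    (hG : IsCanonicalTheta L 0 γ G) {x : ℂ} (hx : G x ≠ 0) :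
    γ ∈ L.lattice ∧ ∀ z, G z = G x := by
  have hqp (ω : ℂ) (hω : ω ∈ ({L.ω₁, L.ω₂} : Set ℂ)) :
      IsQuasiPeriodic G ω 0 (2 * (conj γ * ω - conj ω * γ)) := by
    simpa using hG.isQuasiPeriodic ω hω
  have hre (ω : ℂ) : (2 * (conj γ * ω - conj ω * γ)).re = 0 := by
    simp only [mul_re, re_ofNat, im_ofNat, sub_re, conj_re, conj_im]
    ring
  have hconst := apply_eq_apply_of_periodic_norm L hG.differentiable
    ((hqp L.ω₁ (by simp)).periodic_norm (hre _)) ((hqp L.ω₂ (by simp)).periodic_norm (hre _))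
  refine ⟨(mem_lattice_iff_exp_eq_one harea).mpr fun ω hω => ?_, fun z => hconst z x⟩
  refine mul_right_cancel₀ hx ?_
  simpa [hconst (x + ω) x] using (hqp ω hω x).symm

end IsCanonicalTheta

lemma IsQuasiPeriodic.sigmaStar_of_eq {l : ℂ} (hl : l ∈ L.lattice) (hl2 : l / 2 ∉ L.lattice)
    (h : bconst L.ω₁ L.ω₂ * l + wZeta L.ω₁ L.ω₂ (l / 2) = conj l) :
    IsQuasiPeriodic (sigmaStar L.ω₁ L.ω₂) l (2 * conj l) (conj l * l + Real.pi * I) := by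
  have hmul := (exp_quadratic (bconst L.ω₁ L.ω₂) 0 l).mul (isQuasiPeriodic_wSigma hl hl2)
  simp only [zero_mul, add_zero] at hmul
  convert hmul using 1
  · rfl
  · linear_combination -2 * h
  · linear_combination -l * h

-- The constant `b` settles the first period; the Legendre relation then yields the second.
lemma isQuasiPeriodic_sigmaStar (hreal : conj L.ω₁ = L.ω₁)
    (harea : conj L.ω₁ * L.ω₂ - conj L.ω₂ * L.ω₁ = Real.pi * I) :
    ∀ ω ∈ ({L.ω₁, L.ω₂} : Set ℂ),
      IsQuasiPeriodic (sigmaStar L.ω₁ L.ω₂) ω (2 * conj ω) (conj ω * ω + Real.pi * I) := by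
  have hω₁ := ω₁_ne_zero L
  have hb : bconst L.ω₁ L.ω₂ * L.ω₁ + wZeta L.ω₁ L.ω₂ (L.ω₁ / 2) = conj L.ω₁ := by
    rw [bconst, lambda1, hreal]
    field_simp
    ring
  rintro ω (rfl | rfl)
  · exact .sigmaStar_of_eq L.ω₁_mem_lattice L.ω₁_div_two_notMem_lattice hb
  · refine .sigmaStar_of_eq L.ω₂_mem_lattice L.ω₂_div_two_notMem_lattice ?_
    refine mul_left_cancel₀ hω₁ ?_
    linear_combination
      L.ω₂ * hb + harea - legendre_relation (im_div_pos_of_area harea) / 2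

lemma canonicalSigma_eq (α z : ℂ) : canonicalSigma L α z =
    exp (2 * conj α * z - conj α * α + bconst L.ω₁ L.ω₂ * (z - α) ^ 2) *
      wSigma L.ω₁ L.ω₂ (z - α) := by
  rw [canonicalSigma, sigmaStar, ← mul_assoc, ← exp_add]

lemma canonicalSigma_eq_zero_iff {α z : ℂ} : canonicalSigma L α z = 0 ↔ z - α ∈ L.lattice := by
  rw [canonicalSigma_eq, mul_eq_zero_iff_left (exp_ne_zero _), wSigma_eq_zero_iff]

lemma differentiable_canonicalSigma (α : ℂ) : Differentiable ℂ (canonicalSigma L α) := by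
  have hσ := differentiable_wSigma L
  rw [funext (canonicalSigma_eq α)]
  fun_prop

lemma deriv_canonicalSigma_ne_zero {α z : ℂ} (hz : z - α ∈ L.lattice) :
    deriv (canonicalSigma L α) z ≠ 0 := by
  have hσ := differentiable_wSigma L
  rw [funext (canonicalSigma_eq α), deriv_fun_mul (by fun_prop) (by fun_prop),
    (wSigma_eq_zero_iff L).mpr hz, mul_zero, zero_add, deriv_comp_sub_const]
  exact mul_ne_zero (exp_ne_zero _) (deriv_wSigma_ne_zero L hz)

lemma canonicalSigma_half_period_ne_zero (α : ℂ) : canonicalSigma L α (L.ω₁ / 2 + α) ≠ 0 := by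
  rw [Ne, canonicalSigma_eq_zero_iff, add_sub_cancel_right]
  exact L.ω₁_div_two_notMem_lattice

lemma isCanonicalTheta_canonicalSigma (hreal : conj L.ω₁ = L.ω₁)
    (harea : conj L.ω₁ * L.ω₂ - conj L.ω₂ * L.ω₁ = Real.pi * I) (α : ℂ) :
    IsCanonicalTheta L 1 α (canonicalSigma L α) := by
  refine ⟨differentiable_canonicalSigma α, fun ω hω z => ?_⟩
  rw [canonicalSigma, add_sub_right_comm, isQuasiPeriodic_sigmaStar hreal harea ω hω,
    canonicalSigma, ← mul_assoc, ← mul_assoc, ← exp_add, ← exp_add]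
  congr 2
  push_cast
  ring

/-! ### Factorization of canonical theta functions -/

lemma IsCanonicalTheta.exists_eq_mul_canonicalSigma (hreal : conj L.ω₁ = L.ω₁)
    (harea : conj L.ω₁ * L.ω₂ - conj L.ω₂ * L.ω₁ = Real.pi * I) {N : ℕ} {γ : ℂ} {G : ℂ → ℂ}
    (hG : IsCanonicalTheta L (N + 1) γ G) :
    ∃ α H, IsCanonicalTheta L N (γ - α) H ∧ ∀ z, G z = H z * canonicalSigma L α z := by
  have hθ := hG.isTheta harea
  obtain ⟨α, hα⟩ := hθ.exists_eq_zero_of_pos (im_div_pos_of_area harea) (by positivity)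
  have hvanish (z : ℂ) (hz : canonicalSigma L α z = 0) : G z = 0 :=
    (hθ.apply_eq_zero_iff_of_sub_mem (canonicalSigma_eq_zero_iff.mp hz)).mpr hα
  have hmul := entireQuotient_mul hvanish
  refine ⟨α, entireQuotient G (canonicalSigma L α), ?_, fun z => (hmul z).symm⟩
  refine .of_mul (differentiable_entireQuotient hG.differentiable
      (differentiable_canonicalSigma α) hvanish fun z hz =>
        deriv_canonicalSigma_ne_zero (canonicalSigma_eq_zero_iff.mp hz))
    (isCanonicalTheta_canonicalSigma hreal harea α) (canonicalSigma_half_period_ne_zero α) ?_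
  simpa only [hmul] using hG

lemma IsCanonicalTheta.exists_eq_prod_canonicalSigma (hreal : conj L.ω₁ = L.ω₁)
    (harea : conj L.ω₁ * L.ω₂ - conj L.ω₂ * L.ω₁ = Real.pi * I) {N : ℕ} {γ : ℂ} {G : ℂ → ℂ}
    (hG : IsCanonicalTheta L N γ G) {x : ℂ} (hx : G x ≠ 0) :
    ∃ lam : ℂ, ∃ α : Fin N → ℂ, (∑ j, α j) - γ ∈ L.lattice ∧
      ∀ z, G z = lam * ∏ j, canonicalSigma L (α j) z := by
  induction N generalizing γ G with
  | zero =>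
    obtain ⟨hγ, hconst⟩ := hG.mem_lattice_of_degree_zero harea hx
    exact ⟨G x, Fin.elim0, by simpa using hγ, by simpa using hconst⟩
  | succ N ih =>
    obtain ⟨α, H, hH, hGH⟩ := hG.exists_eq_mul_canonicalSigma hreal harea
    obtain ⟨lam, β, hβ, hprod⟩ := ih hH (left_ne_zero_of_mul (hGH x ▸ hx))
    refine ⟨lam, Fin.snoc β α, ?_, fun z => ?_⟩
    · simpa [Fin.sum_univ_castSucc, sub_sub_eq_add_sub] using hβ
    · rw [hGH, hprod, mul_assoc]
      simp [Fin.prod_univ_castSucc]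

theorem isCanonicalTheta_iff (hreal : conj L.ω₁ = L.ω₁)
    (harea : conj L.ω₁ * L.ω₂ - conj L.ω₂ * L.ω₁ = Real.pi * I) {N : ℕ} (hN : 1 ≤ N) {γ : ℂ}
    {G : ℂ → ℂ} : IsCanonicalTheta L N γ G ↔
      ∃ lam : ℂ, ∃ α : Fin N → ℂ, (∑ j, α j) - γ ∈ L.lattice ∧
        ∀ z, G z = lam * ∏ j, canonicalSigma L (α j) z := by
  constructor
  · intro hG
    by_cases hzero : ∀ z, G z = 0
    · refine ⟨0, Pi.single ⟨0, hN⟩ γ, ?_, by simpa using hzero⟩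
      rw [Finset.sum_pi_single']
      simp
    · push Not at hzero
      obtain ⟨x, hx⟩ := hzero
      exact hG.exists_eq_prod_canonicalSigma hreal harea hx
  · rintro ⟨lam, α, hα, hprod⟩
    rw [funext hprod]
    exact ((IsCanonicalTheta.prod fun j =>
      isCanonicalTheta_canonicalSigma hreal harea (α j)).congr_of_sub_mem harea hα).const_mul lam

end Canonical

/-! ### The `∂̄`-equation -/

/-- The Wirtinger derivative `∂̄F = (∂ₓF + i ∂ᵧF) / 2`. -/
noncomputable def dbar (F : ℂ → ℂ) (z : ℂ) : ℂ :=
  (fderiv ℝ F z 1 + I * fderiv ℝ F z I) / 2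

section Dbar

variable {F : ℂ → ℂ} {z : ℂ}

lemma differentiableAt_complex_iff_dbar_eq_zero :
    DifferentiableAt ℂ F z ↔ DifferentiableAt ℝ F z ∧ dbar F z = 0 := by
  rw [differentiableAt_complex_iff_differentiableAt_real, dbar, div_eq_zero_iff, smul_eq_mul,
    or_iff_left two_ne_zero]
  refine and_congr_right fun _ => ⟨fun h => ?_, fun h => ?_⟩
  · linear_combination I * h + fderiv ℝ F z 1 * I_sq
  · linear_combination -I * h + fderiv ℝ F z I * I_sq

lemma dbar_exp_mul (c : ℂ) (hF : DifferentiableAt ℝ F z) :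
    dbar (fun z => exp (c * (z * conj z)) * F z) z =
      exp (c * (z * conj z)) * (dbar F z + c * z * F z) := by
  have hconj : HasFDerivAt (fun z : ℂ => conj z) (conjCLE : ℂ →L[ℝ] ℂ) z := conjCLE.hasFDerivAt
  have hG := (((hasFDerivAt_id z).fun_mul hconj).const_mul c).cexp.fun_mul hF.hasFDerivAt
  simp only [id] at hG
  rw [dbar, dbar, hG.fderiv]
  simp only [smul_add, add_apply, smul_apply, smul_eq_mul, ContinuousLinearEquiv.coe_coe,
    ContinuousAlgEquiv.coeCLE_apply, conjCAE_apply, map_one, mul_one,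
    ContinuousLinearMap.id_apply, conj_I, mul_neg]
  linear_combination (exp (c * (z * conj z)) * F z * c * (conj z - z) / 2) * I_sq

lemma contDiff_exp_mul {n : WithTop ℕ∞} (c : ℂ) (hF : ContDiff ℝ n F) :
    ContDiff ℝ n fun z => exp (c * (z * conj z)) * F z := by
  have hconj : ContDiff ℝ n fun z : ℂ => conj z := conjCLE.contDiff
  fun_prop

lemma differentiable_exp_mul_iff_dbar {c : ℂ} :
    (Differentiable ℂ fun z => exp (c * (z * conj z)) * F z) ↔
      ContDiff ℝ 1 F ∧ ∀ z, dbar F z + c * z * F z = 0 := by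
  constructor
  · intro hG
    have hF : ContDiff ℝ 1 F := by
      have h := contDiff_exp_mul (n := 1) (-c) (hG.contDiff.restrict_scalars ℝ)
      simpa only [neg_mul, ← mul_assoc, ← exp_add, neg_add_cancel, exp_zero, one_mul] using h
    refine ⟨hF, fun z => ?_⟩
    have hdbar := (differentiableAt_complex_iff_dbar_eq_zero.mp (hG z)).2
    rw [dbar_exp_mul c (hF.differentiable one_ne_zero z)] at hdbar
    exact (mul_eq_zero_iff_left (exp_ne_zero _)).mp hdbar
  · rintro ⟨hF, hdbar⟩ z
    refine differentiableAt_complex_iff_dbar_eq_zero.mpr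
      ⟨(contDiff_exp_mul c hF).differentiable one_ne_zero z, ?_⟩
    rw [dbar_exp_mul c (hF.differentiable one_ne_zero z), hdbar, mul_zero]

end Dbar

lemma isQuasiPeriodic_exp_mul_iff {F : ℂ → ℂ} {c ω a b : ℂ} :
    IsQuasiPeriodic (fun z => exp (c * (z * conj z)) * F z) ω a b ↔
      ∀ z, F (z + ω) =
        exp (a * z + b - c * (z * conj ω + ω * conj z + ω * conj ω)) * F z := by
  refine forall_congr' fun z => ?_
  have hexp : exp (a * z + b) * (exp (c * (z * conj z)) * F z) =
      exp (c * ((z + ω) * conj (z + ω))) *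
        (exp (a * z + b - c * (z * conj ω + ω * conj z + ω * conj ω)) * F z) := by
    simp only [← mul_assoc, ← exp_add, map_add]
    ring_nf
  rw [hexp, mul_right_inj' (exp_ne_zero _)]

lemma two_mul_I_mul_im (w : ℂ) : 2 * I * (w.im : ℂ) = w - conj w := by
  rw [sub_conj, mul_right_comm]
  push_cast
  ring

lemma isCanonicalTheta_exp_mul_iff {L : PeriodPair} {N : ℕ} {γ : ℂ} {F : ℂ → ℂ} :
    IsCanonicalTheta L N γ (fun z => exp (N * (z * conj z)) * F z) ↔
      ContDiff ℝ 1 F ∧ (∀ z, dbar F z + N * z * F z = 0) ∧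
        ∀ ω ∈ ({L.ω₁, L.ω₂} : Set ℂ), ∀ z, F (z + ω) =
          (-1) ^ N * exp (2 * I * ((conj ω * (N * z - 2 * γ)).im : ℂ)) * F z := by
  have hfactor (ω z : ℂ) : exp (2 * N * conj ω * z +
      (N * (conj ω * ω + Real.pi * I) + 2 * (conj γ * ω - conj ω * γ)) -
        N * (z * conj ω + ω * conj z + ω * conj ω)) =
      (-1) ^ N * exp (2 * I * ((conj ω * (N * z - 2 * γ)).im : ℂ)) := by
    rw [two_mul_I_mul_im, ← exp_pi_mul_I, ← exp_nat_mul, ← exp_add]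
    simp only [map_mul, map_sub, conj_conj, map_natCast, map_ofNat]
    ring_nf
  rw [← and_assoc, ← differentiable_exp_mul_iff_dbar]
  simp only [← hfactor, ← isQuasiPeriodic_exp_mul_iff]
  exact ⟨fun h => ⟨h.differentiable, h.isQuasiPeriodic⟩, fun h => ⟨h.1, h.2⟩⟩

/-! ### Pseudopolynomials -/

lemma exp_mul_pseudoPoly (L : PeriodPair) (α z : ℂ) :
    exp (z * conj z) * pseudoPoly L.ω₁ L.ω₂ α z = canonicalSigma L α z := by
  have hnorm : ((‖z - α‖ ^ 2 : ℝ) : ℂ) = (z - α) * (conj z - conj α) := by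
    rw [← map_sub, mul_conj, normSq_eq_norm_sq]
  rw [pseudoPoly, canonicalSigma, hnorm, two_mul_I_mul_im, ← mul_assoc, ← mul_assoc, ← exp_add,
    ← exp_add, map_mul, conj_conj]
  ring_nf

lemma exp_mul_prod_pseudoPoly (L : PeriodPair) {N : ℕ} (α : Fin N → ℂ) (z : ℂ) :
    exp (N * (z * conj z)) * ∏ j, pseudoPoly L.ω₁ L.ω₂ (α j) z =
      ∏ j, canonicalSigma L (α j) z := by
  simp only [← exp_mul_pseudoPoly, Finset.prod_mul_distrib, Finset.prod_const, Finset.card_univ,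
    Fintype.card_fin, exp_nat_mul]

lemma eq_mul_prod_pseudoPoly_iff (L : PeriodPair) {N : ℕ} {F : ℂ → ℂ} {lam : ℂ}
    {α : Fin N → ℂ} : (F = fun z => lam * ∏ j, pseudoPoly L.ω₁ L.ω₂ (α j) z) ↔
      ∀ z, exp (N * (z * conj z)) * F z = lam * ∏ j, canonicalSigma L (α j) z := by
  simp only [funext_iff, ← exp_mul_prod_pseudoPoly, mul_left_comm lam,
    mul_right_inj' (exp_ne_zero _)]

lemma mem_lattice_iff_mem_latticeSet {L : PeriodPair} {w : ℂ} :
    w ∈ L.lattice ↔ w ∈ latticeSet L.ω₁ L.ω₂ := by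
  simp only [PeriodPair.mem_lattice, latticeSet, Set.mem_ofPred_eq, eq_comm]

lemma linearIndependent_pair_of_im_eq_zero {w₁ w₂ : ℂ} (h₁ : w₁ ≠ 0) (him₁ : w₁.im = 0)
    (him₂ : w₂.im ≠ 0) : LinearIndependent ℝ ![w₁, w₂] := by
  refine LinearIndependent.pair_iff.mpr fun s t h => ?_
  have ht : t = 0 := by simpa [him₁, him₂] using congrArg im h
  exact ⟨by simpa [ht, h₁] using h, ht⟩

lemma conj_mul_sub_conj_mul_of_im_eq_zero {w₁ w₂ : ℂ} (him : w₁.im = 0) :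
    conj w₁ * w₂ - conj w₂ * w₁ = 2 * (w₁.re * w₂.im : ℝ) * I := by
  obtain ⟨r, rfl⟩ : ∃ r : ℝ, w₁ = r := ⟨w₁.re, Complex.ext rfl him⟩
  rw [conj_ofReal, ofReal_re]
  push_cast
  linear_combination -(r : ℂ) * two_mul_I_mul_im w₂

/-- characterization of the fiber `ψpol_N^γ(ℂ/Λ)`: a function
`F : ℂ → ℂ` is a multiple `λ·Π_𝛂` of a monic pseudopolynomial of degree `N`
with `α₁ + ⋯ + α_N − γ ∈ Λ` if and only if `F` is `C¹`-smooth, satisfies the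
differential equation `∂̄F + NzF = 0` and the periodicity-type conditions. -/
theorem fiber_characterization (ω₁ ω₂ : ℂ)
    (h1 : ω₁.im = 0) (h1' : 0 < ω₁.re) (h2 : 0 < ω₂.im)
    (harea : ω₁.re * ω₂.im = Real.pi / 2)
    (N : ℕ) (hN : 1 ≤ N) (γ : ℂ) (F : ℂ → ℂ) :
    (∃ lam : ℂ, ∃ α : Fin N → ℂ,
      ((∑ j, α j) - γ) ∈ latticeSet ω₁ ω₂ ∧
      F = fun z => lam * ∏ j, pseudoPoly ω₁ ω₂ (α j) z) ↔
    ContDiff ℝ 1 F ∧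
      (∀ z : ℂ,
        (fderiv ℝ F z 1 + Complex.I * fderiv ℝ F z Complex.I) / 2 +
          (N : ℂ) * z * F z = 0) ∧
      (∀ ω ∈ ({ω₁, ω₂} : Set ℂ), ∀ z : ℂ,
        F (z + ω) =
          (-1 : ℂ) ^ N *
            Complex.exp (2 * Complex.I *
              ((((starRingEnd ℂ) ω) * ((N : ℂ) * z - 2 * γ)).im : ℂ)) * F z) := by
  have hω₁ : ω₁ ≠ 0 := fun h => h1'.ne' (by simp [h])
  let L : PeriodPair := ⟨ω₁, ω₂, linearIndependent_pair_of_im_eq_zero hω₁ h1 h2.ne'⟩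
  have hreal : conj L.ω₁ = L.ω₁ := conj_eq_iff_im.mpr h1
  have hcovolume : conj L.ω₁ * L.ω₂ - conj L.ω₂ * L.ω₁ = Real.pi * I := by
    rw [conj_mul_sub_conj_mul_of_im_eq_zero h1, harea]
    push_cast
    ring
  have htheta := isCanonicalTheta_iff hreal hcovolume hN (γ := γ)
    (G := fun z => exp (N * (z * conj z)) * F z)
  rw [isCanonicalTheta_exp_mul_iff] at htheta
  simp only [← eq_mul_prod_pseudoPoly_iff, mem_lattice_iff_mem_latticeSet] at htheta
  exact htheta.symm
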